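/- Induction axiom for relativized common knowledge: for every epistemic model M, every group of agents G ⊆ A, every world w, and all formulas φ, ψ, it holds that M,w ⊨ (E_G(ψ → φ) ∧ C_G(ψ | φ → E_G(ψ → φ))) → C_G(ψ | φ). -/

import Mathlib

/-- Syntax of public announcement logic with relativized common knowledge.
`Agent` is the set of agents, `AtomP` the set of atomic propositions. -/
inductive Form (Agent AtomP : Type) : Type
  | top  : Form Agent AtomP
  | atom : AtomP → Form Agent AtomP
  | neg  : Form Agent AtomP → Form Agent AtomP
  | or   : Form Agent AtomP → Form Agent AtomP → Form Agent AtomP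
  | know : Agent → Form Agent AtomP → Form Agent AtomP
  | ev   : Set Agent → Form Agent AtomP → Form Agent AtomP
  | ck   : Set Agent → Form Agent AtomP → Form Agent AtomP → Form Agent AtomP
  | ann  : Form Agent AtomP → Form Agent AtomP → Form Agent AtomP

namespace Form
variable {Agent AtomP : Type}
/-- φ ∧ ψ -/
def and (φ ψ : Form Agent AtomP) : Form Agent AtomP := .neg (.or (.neg φ) (.neg ψ))
/-- φ → ψ -/
def imp (φ ψ : Form Agent AtomP) : Form Agent AtomP := .or (.neg φ) ψ
/-- φ ↔ ψ -/
def iff (φ ψ : Form Agent AtomP) : Form Agent AtomP := (φ.imp ψ).and (ψ.imp φ)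
end Form

/-- Truth of a PAL formula at world `w` of the epistemic model given by the set of
worlds `W`, accessibility relations `R` and valuation `V`.  A public announcement
`[!φ]ψ` is evaluated in the updated model whose worlds are the subtype of worlds
satisfying `φ`, with accessibility relations and valuation restricted accordingly. -/
def Sat {Agent AtomP : Type} :
    Form Agent AtomP → (W : Type) → (Agent → W → W → Prop) → (AtomP → Set W) → W → Prop
  | .top, _, _, _, _ => True
  | .atom p, _, _, V, w => w ∈ V p
  | .neg φ, W, R, V, w => ¬ Sat φ W R V w
  | .or φ ψ, W, R, V, w => Sat φ W R V w ∨ Sat ψ W R V w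
  | .know i φ, W, R, V, w => ∀ v, R i w v → Sat φ W R V v
  | .ev G φ, W, R, V, w => ∀ v, (∃ i ∈ G, R i w v) → Sat φ W R V v
  | .ck G φ ψ, W, R, V, w =>
      ∀ v, Relation.TransGen (fun u u' => (∃ i ∈ G, R i u u') ∧ Sat φ W R V u') w v →
        Sat ψ W R V v
  | .ann φ ψ, W, R, V, w =>
      ∀ h : Sat φ W R V w,
        Sat ψ {v : W // Sat φ W R V v} (fun i x y => R i x.1 y.1)
          (fun p => {x : {v : W // Sat φ W R V v} | x.1 ∈ V p}) ⟨w, h⟩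

/-- A formula is valid iff it is true at every world of every epistemic model. -/
def Valid {Agent AtomP : Type} (φ : Form Agent AtomP) : Prop :=
  ∀ (W : Type), Nonempty W → ∀ (R : Agent → W → W → Prop) (V : AtomP → Set W) (w : W),
    Sat φ W R V w

/-! At each world, `E_G(ψ → φ)` says that every `R_G^ψ`-successor satisfies `φ`, while `C_G(ψ | ·)`
quantifies over the worlds reachable by nonempty `R_G^ψ`-paths. The two conjuncts of the premise are
therefore the base case and the inductive step of an induction on the length of such a path. -/

section Semantics

variable {Agent AtomP W : Type} {R : Agent → W → W → Prop} {V : AtomP → Set W}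
  {G : Set Agent} {φ ψ : Form Agent AtomP} {w : W}

theorem sat_and : Sat (φ.and ψ) W R V w ↔ Sat φ W R V w ∧ Sat ψ W R V w := by
  simp only [Form.and, Sat, not_or, not_not]

theorem sat_imp : Sat (φ.imp ψ) W R V w ↔ (Sat φ W R V w → Sat ψ W R V w) := by
  simp only [Form.imp, Sat, imp_iff_not_or]

/-- The relativized group accessibility relation `R_G^φ`, whose transitive closure interprets
`C_G(φ | ·)`. Only the target of a step has to satisfy `φ`. -/
def RelativizedAccess (R : Agent → W → W → Prop) (V : AtomP → Set W) (G : Set Agent)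
    (φ : Form Agent AtomP) (u v : W) : Prop :=
  (∃ i ∈ G, R i u v) ∧ Sat φ W R V v

theorem sat_ev_imp :
    Sat (.ev G (φ.imp ψ)) W R V w ↔ ∀ v, RelativizedAccess R V G φ w v → Sat ψ W R V v := by
  simp only [Sat, sat_imp, RelativizedAccess, and_imp]

theorem sat_ck :
    Sat (.ck G φ ψ) W R V w ↔
      ∀ v, Relation.TransGen (RelativizedAccess R V G φ) w v → Sat ψ W R V v :=
  Iff.rfl

end Semantics

/-- Induction axiom for relativized common knowledge:
`M,w ⊨ (E_G(ψ → φ) ∧ C_G(ψ | φ → E_G(ψ → φ))) → C_G(ψ | φ)`.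
Here `Form.ck G ψ φ` denotes `C_G(ψ | φ)` and `Form.ev G` is mutual knowledge `E_G`. -/
theorem ckInduction {Agent AtomP : Type} (W : Type) (hW : Nonempty W)
    (R : Agent → W → W → Prop) (V : AtomP → Set W) (G : Set Agent) (w : W)
    (φ ψ : Form Agent AtomP) :
    Sat (((Form.ev G (ψ.imp φ)).and
            (Form.ck G ψ (φ.imp (Form.ev G (ψ.imp φ))))).imp
          (Form.ck G ψ φ)) W R V w := by
  simp only [sat_imp, sat_and, sat_ck, sat_ev_imp]
  rintro ⟨base, step⟩ v path
  induction path with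
  | single access => exact base _ access
  | tail path access ih => exact step _ path ih _ access
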